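/- In the ring of formal power series ℝ[[t]], the product (∏_{r=1}^{n} (1 − x_r t)) · (Σ_{j≥0} c_{d+j} t^j) equals the polynomial R(t) = Σ_{i=1}^{n−d} α_i ∏_{r ∈ {1,…,n} \setminus {i, i+1, …, i+d}} (1 − x_r t), which has degree at most n−d−1. -/

import Mathlib

open Finset Polynomial PowerSeries

/-- The complete homogeneous symmetric polynomial of degree `j` evaluated at
`v : Fin m → ℝ` (sum of all monomials of total degree `j`, with `hsymm 0 v = 1`). -/
noncomputable def hsymm {m : ℕ} (j : ℕ) (v : Fin m → ℝ) : ℝ :=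
  haveI := Classical.decPred (fun f : Fin j → Fin m => Monotone f)
  ∑ f ∈ Finset.univ.filter (fun f : Fin j → Fin m => Monotone f), ∏ i, v (f i)

/-- The normalized moment sequence: `c_j = 0` for `j < d` and
`c_{d+j} = Σ_{i=1}^{n-d} α_i h_j(x_i, …, x_{i+d})`. -/
noncomputable def cseq (d n : ℕ) (x : Fin n → ℝ) (α : Fin (n - d) → ℝ) (j : ℕ) : ℝ :=
  if d ≤ j then
    ∑ i : Fin (n - d), α i * hsymm (j - d)
      (fun k : Fin (d + 1) => x ⟨i.1 + k.1, by have h1 := i.2; have h2 := k.2; omega⟩)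
  else 0

/-- `Q(t) = ∏_{r=1}^{n} (1 - x_r t)`. -/
noncomputable def Qpoly (n : ℕ) (x : Fin n → ℝ) : Polynomial ℝ :=
  ∏ r : Fin n, (1 - Polynomial.C (x r) * Polynomial.X)

/-- `R(t) = Σ_{i=1}^{n-d} α_i ∏_{r ∉ {i,…,i+d}} (1 - x_r t)`. -/
noncomputable def Rpoly (d n : ℕ) (x : Fin n → ℝ) (α : Fin (n - d) → ℝ) : Polynomial ℝ :=
  ∑ i : Fin (n - d), Polynomial.C (α i) *
    ∏ r ∈ Finset.univ.filter (fun r : Fin n => r.1 < i.1 ∨ i.1 + d < r.1),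
      (1 - Polynomial.C (x r) * Polynomial.X)

/-!
The generating series of the complete homogeneous symmetric polynomials in variables `v` is the
product of the geometric series `1 / (1 - v_i t)`, because its `j`-th coefficient is the sum of all
monomials of degree `j`. Hence multiplying it by `∏ r, (1 - x_r t)`, where `v` is a subfamily of
`x`, cancels exactly the factors of the subfamily and leaves the complementary ones. The theorem is
the linear combination of these identities over the windows `x_i, …, x_{i+d}`; each complementary
product has `n - (d + 1)` linear factors.
-/

section MonotoneTuples

variable {σ : Type*} {j : ℕ}

/-- The multiset of entries of a `j`-tuple, as an element of the `j`-th symmetric power. Restricted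
to monotone tuples it is a bijection, which compares the indexing of `hsymm` with that of
`MvPolynomial.hsymm`. -/
def symOfFn (f : Fin j → σ) : Sym σ j :=
  ⟨(List.ofFn f : Multiset σ), by simp⟩

variable [LinearOrder σ]

theorem symOfFn_injOn_monotone : Set.InjOn symOfFn {f : Fin j → σ | Monotone f} := by
  intro f hf g hg hfg
  have hperm : (List.ofFn f).Perm (List.ofFn g) := Multiset.coe_eq_coe.mp (congrArg Subtype.val hfg)
  exact List.ofFn_injective (hperm.eq_of_sortedLE hf.sortedLE_ofFn hg.sortedLE_ofFn)

theorem exists_monotone_symOfFn_eq (s : Sym σ j) : ∃ f : Fin j → σ, Monotone f ∧ symOfFn f = s := by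
  obtain ⟨s, hcard⟩ := s
  obtain ⟨l, hsorted, rfl⟩ : ∃ l : List σ, l.SortedLE ∧ (l : Multiset σ) = s :=
    ⟨s.sort (· ≤ ·), (s.pairwise_sort (· ≤ ·)).sortedLE, s.sort_eq (· ≤ ·)⟩
  obtain rfl : l.length = j := hcard
  refine ⟨l.get, ?_, Subtype.ext ?_⟩
  · rwa [← List.sortedLE_ofFn_iff, List.ofFn_get]
  · simp only [symOfFn, List.ofFn_get]

open Classical in
theorem eval_hsymm_eq_sum_monotone {R : Type*} [CommSemiring R] [Fintype σ] (v : σ → R) (j : ℕ) :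
    MvPolynomial.eval v (MvPolynomial.hsymm σ R j) =
      ∑ f : Fin j → σ with Monotone f, ∏ i, v (f i) := by
  simp only [MvPolynomial.hsymm, map_sum, ← Multiset.prod_hom', MvPolynomial.eval_X]
  refine (sum_nbij symOfFn (fun _ _ => mem_univ _) ?_ ?_ ?_).symm
  · simpa using symOfFn_injOn_monotone
  · intro s _
    simpa using exists_monotone_symOfFn_eq s
  · intro f _
    simp [symOfFn, List.map_ofFn, List.prod_ofFn]

end MonotoneTuples

section HsymmSeries

variable {R σ : Type*} [Fintype σ] [DecidableEq σ]

theorem eval_hsymm_eq_sum_finsuppAntidiag [CommSemiring R] (v : σ → R) (j : ℕ) :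
    MvPolynomial.eval v (MvPolynomial.hsymm σ R j) =
      ∑ e ∈ univ.finsuppAntidiag j, ∏ i, v i ^ e i := by
  simp only [MvPolynomial.hsymm, map_sum, ← Multiset.prod_hom', MvPolynomial.eval_X]
  refine sum_bij (fun s _ => Multiset.toFinsupp s.1) ?_ ?_ ?_ ?_
  · intro s _
    have hdegree : ∑ i, s.1.count i = j :=
      (Multiset.sum_count_eq_card fun i _ => mem_univ i).trans s.2
    exact mem_finsuppAntidiag.mpr ⟨hdegree, subset_univ _⟩
  · intro s _ t _ h
    exact Subtype.ext (Multiset.toFinsupp.injective h)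
  · intro e he
    exact ⟨⟨Finsupp.toMultiset e, by simpa [Finsupp.sum_fintype] using he⟩, mem_univ _, by simp⟩
  · intro s _
    rw [prod_multiset_map_count]
    refine prod_subset (subset_univ _) fun i _ hi => ?_
    rw [Multiset.count_eq_zero_of_notMem (by simpa using hi), pow_zero]

/-- The generating series `∑ j, h_j(v) t ^ j` of the complete homogeneous symmetric polynomials
evaluated at `v`. -/
noncomputable def hsymmSeries [CommSemiring R] (v : σ → R) : R⟦X⟧ :=
  PowerSeries.mk fun j => MvPolynomial.eval v (MvPolynomial.hsymm σ R j)

theorem hsymmSeries_eq_prod_mk_pow [CommSemiring R] (v : σ → R) :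
    hsymmSeries v = ∏ i, PowerSeries.mk fun j => v i ^ j := by
  ext j
  simp only [hsymmSeries, coeff_mk, PowerSeries.coeff_prod, eval_hsymm_eq_sum_finsuppAntidiag]

theorem one_sub_C_mul_X_mul_mk_pow [CommRing R] (a : R) :
    (1 - PowerSeries.C a * PowerSeries.X) * PowerSeries.mk (fun j => a ^ j) = 1 := by
  rw [mul_comm]
  simpa [rescale_mk] using congrArg (rescale a) (mk_one_mul_one_sub_eq_one R)

theorem prod_one_sub_mul_hsymmSeries [CommRing R] (v : σ → R) :
    (∏ i, (1 - PowerSeries.C (v i) * PowerSeries.X)) * hsymmSeries v = 1 := by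
  simp only [hsymmSeries_eq_prod_mk_pow, ← prod_mul_distrib, one_sub_C_mul_X_mul_mk_pow,
    prod_const_one]

end HsymmSeries

section ComplementaryFactors

variable {R σ ι κ : Type*} [CommRing R]

theorem coe_prod_one_sub_C_mul_X (s : Finset ι) (x : ι → R) :
    ((∏ r ∈ s, (1 - Polynomial.C (x r) * Polynomial.X) : R[X]) : R⟦X⟧) =
      ∏ r ∈ s, (1 - PowerSeries.C (x r) * PowerSeries.X) := by
  rw [← coeToPowerSeries.ringHom_apply, map_prod]
  simp

theorem natDegree_prod_one_sub_C_mul_X_le (s : Finset ι) (x : ι → R) :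
    (∏ r ∈ s, (1 - Polynomial.C (x r) * Polynomial.X)).natDegree ≤ #s := by
  have hfactor (r : ι) : (1 - Polynomial.C (x r) * Polynomial.X).natDegree ≤ 1 := by
    compute_degree
  calc
    _ ≤ ∑ r ∈ s, (1 - Polynomial.C (x r) * Polynomial.X).natDegree := natDegree_prod_le _ _
    _ ≤ #s • 1 := sum_le_card_nsmul _ _ _ fun r _ => hfactor r
    _ = #s := Nat.mul_one _

variable [Fintype σ] [Fintype ι] [DecidableEq ι] [Fintype κ]

/-- The numerator `∑ i, α_i ∏ r ∉ range (e i), (1 - x_r t)` of the generating function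
`∑ i, α_i ∑ j, h_j(x ∘ e i) t ^ j` over the common denominator `∏ r, (1 - x_r t)`. -/
noncomputable def complNumerator (e : κ → σ ↪ ι) (x : ι → R) (α : κ → R) : R[X] :=
  ∑ i, Polynomial.C (α i) * ∏ r ∈ (univ.map (e i))ᶜ, (1 - Polynomial.C (x r) * Polynomial.X)

theorem natDegree_complNumerator_le (e : κ → σ ↪ ι) (x : ι → R) (α : κ → R) :
    (complNumerator e x α).natDegree ≤ Fintype.card ι - Fintype.card σ := by
  refine natDegree_sum_le_of_forall_le _ _ fun i _ => ?_
  calc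
    _ ≤ (∏ r ∈ (univ.map (e i))ᶜ, (1 - Polynomial.C (x r) * Polynomial.X)).natDegree :=
      natDegree_C_mul_le _ _
    _ ≤ #(univ.map (e i))ᶜ := natDegree_prod_one_sub_C_mul_X_le _ _
    _ = Fintype.card ι - Fintype.card σ := by rw [card_compl, card_map, card_univ]

variable [DecidableEq σ]

theorem coe_prod_one_sub_mul_hsymmSeries_comp (e : σ ↪ ι) (x : ι → R) :
    ((∏ r, (1 - Polynomial.C (x r) * Polynomial.X) : R[X]) : R⟦X⟧) * hsymmSeries (x ∘ e) =
      ((∏ r ∈ (univ.map e)ᶜ, (1 - Polynomial.C (x r) * Polynomial.X) : R[X]) : R⟦X⟧) := by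
  have hcancel : (∏ k, (1 - PowerSeries.C (x (e k)) * PowerSeries.X)) * hsymmSeries (x ∘ e) = 1 :=
    prod_one_sub_mul_hsymmSeries (x ∘ e)
  simp only [coe_prod_one_sub_C_mul_X]
  rw [← prod_compl_mul_prod (univ.map e), prod_map, mul_assoc, hcancel, mul_one]

theorem cseq_rational_generating_function_general (e : κ → σ ↪ ι) (x : ι → R) (α : κ → R) :
    ((∏ r, (1 - Polynomial.C (x r) * Polynomial.X) : R[X]) : R⟦X⟧) *
        (PowerSeries.mk fun j =>
          ∑ i, α i * MvPolynomial.eval (x ∘ e i) (MvPolynomial.hsymm σ R j)) =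
      (complNumerator e x α : R⟦X⟧) ∧
    (complNumerator e x α).natDegree ≤ Fintype.card ι - Fintype.card σ := by
  refine ⟨?_, natDegree_complNumerator_le e x α⟩
  have hseries : (PowerSeries.mk fun j =>
      ∑ i, α i * MvPolynomial.eval (x ∘ e i) (MvPolynomial.hsymm σ R j)) =
        ∑ i, PowerSeries.C (α i) * hsymmSeries (x ∘ e i) := by
    ext j
    simp [hsymmSeries]
  have hnumerator : (complNumerator e x α : R⟦X⟧) = ∑ i, PowerSeries.C (α i) *
      ((∏ r ∈ (univ.map (e i))ᶜ, (1 - Polynomial.C (x r) * Polynomial.X) : R[X]) : R⟦X⟧) := by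
    rw [complNumerator, ← coeToPowerSeries.ringHom_apply, map_sum]
    simp only [coeToPowerSeries.ringHom_apply, Polynomial.coe_mul, Polynomial.coe_C]
  rw [hseries, hnumerator, mul_sum]
  simp only [mul_left_comm _ (PowerSeries.C _), coe_prod_one_sub_mul_hsymmSeries_comp]

end ComplementaryFactors

section Windows

variable {d n : ℕ}

/-- The embedding of `Fin (d + 1)` onto the window `i, i + 1, …, i + d` of `Fin n`; the index
`i : Fin (n - d)` ranges over the windows that fit. -/
def window (i : Fin (n - d)) : Fin (d + 1) ↪ Fin n where
  toFun k := ⟨i + k, by omega⟩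
  inj' k l h := by simpa [Fin.ext_iff] using h

@[simp]
theorem coe_window (i : Fin (n - d)) (k : Fin (d + 1)) : (window i k : ℕ) = i + k :=
  rfl

theorem compl_map_window (i : Fin (n - d)) :
    (univ.map (window i))ᶜ = univ.filter fun r : Fin n => r.1 < i.1 ∨ i.1 + d < r.1 := by
  ext r
  have hmem : r ∈ univ.map (window i) ↔ i.1 ≤ r.1 ∧ r.1 ≤ i.1 + d := by
    simp only [mem_map, mem_univ, true_and, Fin.ext_iff, coe_window]
    exact ⟨fun ⟨k, hk⟩ => by omega, fun h => ⟨⟨r - i, by omega⟩, Nat.add_sub_cancel' h.1⟩⟩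
  rw [mem_compl, hmem, mem_filter_univ]
  omega

theorem Rpoly_eq_complNumerator (x : Fin n → ℝ) (α : Fin (n - d) → ℝ) :
    Rpoly d n x α = complNumerator window x α := by
  simp only [Rpoly, complNumerator, compl_map_window]

theorem hsymm_eq_eval_hsymm {m : ℕ} (j : ℕ) (v : Fin m → ℝ) :
    hsymm j v = MvPolynomial.eval v (MvPolynomial.hsymm (Fin m) ℝ j) := by
  rw [eval_hsymm_eq_sum_monotone, hsymm]
  congr!

theorem cseq_add (x : Fin n → ℝ) (α : Fin (n - d) → ℝ) (j : ℕ) :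
    cseq d n x α (d + j) = ∑ i, α i *
      MvPolynomial.eval (x ∘ window i) (MvPolynomial.hsymm (Fin (d + 1)) ℝ j) := by
  rw [cseq, if_pos (Nat.le_add_right d j), Nat.add_sub_cancel_left]
  simp only [hsymm_eq_eval_hsymm]
  rfl

end Windows

/-- **Rational generating function of the normalized moments.** In `ℝ[[t]]`,
`(∏_{r=1}^{n}(1 - x_r t)) · (Σ_{j≥0} c_{d+j} t^j) = R(t)`, a polynomial of
degree at most `n - d - 1`. -/
theorem cseq_rational_generating_function (d n : ℕ) (hn : d + 1 ≤ n)
    (x : Fin n → ℝ) (hx : StrictMono x) (α : Fin (n - d) → ℝ) :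
    (Qpoly n x : PowerSeries ℝ) * (PowerSeries.mk fun j => cseq d n x α (d + j))
        = (Rpoly d n x α : PowerSeries ℝ)
    ∧ (Rpoly d n x α).natDegree ≤ n - d - 1 := by
  simpa [Qpoly, Rpoly_eq_complNumerator, cseq_add, Nat.sub_sub] using
    cseq_rational_generating_function_general (window (d := d)) x α
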